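/- Let n ≥ 2 and let G be an almost controllable graph on Fin n with twins τ < τ′ such that the (τ,n)-cofactor of W(G) equals ±2^{⌊n/2⌋−1}·b for an odd, square-free, positive integer b. Then det W₀(G) = 2^{⌊n/2⌋}·b² and det Ŵ(G) = ±2^{⌊n/2⌋}·b. -/

import Mathlib

/-!
The vector `ξ` collects the cofactors along the last column, so replacing the last column of the
walk matrix by any vector `v` gives a matrix of determinant `∑ i, v i * ξ i`
(`det_replaceLast`, by Laplace expansion).

The twin transposition is an automorphism, so it fixes every vector `Aᵏe` and the rows `τ` and `τ'`
of the walk matrix agree. Deleting any other row leaves two equal rows, hence `ξ` vanishes outside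
`{τ, τ'}`. Taking `v = e` repeats the first column, so `∑ i, ξ i = 0` and `ξ τ' = -ξ τ`
(`xiVec_twin`). The two determinants are therefore `2^{1-⌊n/2⌋} * 2 * (ξ τ)²` and `-2 * ξ τ`,
and the claim follows by substituting the value of the cofactor.
-/

open Matrix

namespace AlmostControllableGraphs

variable {n : ℕ}

/-- The all-ones vector. -/
def eVec (m : ℕ) : Fin m → ℤ := fun _ => 1

/-- The walk matrix `W(G) = [e, Ae, A²e, …, A^{n-1}e]` (columns indexed by `Fin (n+2)`). -/
def walkMatrix (A : Matrix (Fin (n + 2)) (Fin (n + 2)) ℤ) :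
    Matrix (Fin (n + 2)) (Fin (n + 2)) ℤ :=
  Matrix.of fun i j => ((A ^ (j : ℕ)) *ᵥ eVec (n + 2)) i

/-- `G` is almost controllable if its walk matrix has rank `n - 1` over `ℚ`. -/
def IsAlmostControllable (A : Matrix (Fin (n + 2)) (Fin (n + 2)) ℤ) : Prop :=
  ((walkMatrix A).map ((↑) : ℤ → ℚ)).rank = n + 1

/-- The matrix `V = [e, Ae, …, A^{n-2}e]`, the first `n - 1` columns of the walk matrix. -/
def Vmat (A : Matrix (Fin (n + 2)) (Fin (n + 2)) ℤ) :
    Matrix (Fin (n + 2)) (Fin (n + 1)) ℤ :=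
  Matrix.of fun i j => walkMatrix A i j.castSucc

/-- The matrix obtained from `V` by deleting row `i`. -/
def Xmat (A : Matrix (Fin (n + 2)) (Fin (n + 2)) ℤ) (i : Fin (n + 2)) :
    Matrix (Fin (n + 1)) (Fin (n + 1)) ℤ :=
  Matrix.of fun r c => Vmat A (i.succAbove r) c

/-- The `(i, n)`-cofactor of the walk matrix: `(−1)^{n+i}` times the determinant of the
matrix obtained by deleting row `i` and the last column from `W(G)`.
(In 0-based indexing the sign is `(−1)^{i + (n-1)}`.) -/
def cofactorLast (A : Matrix (Fin (n + 2)) (Fin (n + 2)) ℤ) (i : Fin (n + 2)) : ℤ :=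
  (-1 : ℤ) ^ ((i : ℕ) + (n + 1)) * (Xmat A i).det

/-- The vector `ξ(G)` of last-column cofactors of the walk matrix. -/
def xiVec (A : Matrix (Fin (n + 2)) (Fin (n + 2)) ℤ) : Fin (n + 2) → ℤ :=
  fun i => cofactorLast A i

/-- The rational scalar `2^{1 - ⌊n/2⌋}`. -/
def twoPow (n : ℕ) : ℚ := (2 : ℚ) ^ ((1 : ℤ) - (((n + 2) / 2 : ℕ) : ℤ))

/-- The matrix `W_δ(G) = [e, Ae, …, A^{n-2}e, (−1)^δ·2^{1-⌊n/2⌋}·ξ(G)]`. -/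
def Wdelta (A : Matrix (Fin (n + 2)) (Fin (n + 2)) ℤ) (δ : ℕ) :
    Matrix (Fin (n + 2)) (Fin (n + 2)) ℚ :=
  Matrix.of fun i j =>
    if (j : ℕ) = n + 1 then (-1 : ℚ) ^ δ * twoPow n * (xiVec A i : ℚ)
    else ((walkMatrix A i j : ℤ) : ℚ)

/-- A matrix is regular orthogonal if it is orthogonal and has all row sums equal to 1. -/
def IsRegularOrthogonal {K : Type*} [Field K] {m : ℕ} (Q : Matrix (Fin m) (Fin m) K) : Prop :=
  Qᵀ * Q = 1 ∧ Q *ᵥ (fun _ => (1 : K)) = fun _ => 1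

/-- Adjacency matrix of the complement graph. -/
def complMat (A : Matrix (Fin (n + 2)) (Fin (n + 2)) ℤ) :
    Matrix (Fin (n + 2)) (Fin (n + 2)) ℤ :=
  Matrix.of fun i j => if i = j then 0 else 1 - A i j

/-- Two graphs are generalized cospectral if they are cospectral and so are their complements. -/
def GenCospectral (A B : Matrix (Fin (n + 2)) (Fin (n + 2)) ℤ) : Prop :=
  A.charpoly = B.charpoly ∧ (complMat A).charpoly = (complMat B).charpoly

/-- `τ` and `τ'` are twins: the transposition swapping them is an automorphism. -/
def IsTwinPair (A : Matrix (Fin (n + 2)) (Fin (n + 2)) ℤ) (τ τ' : Fin (n + 2)) : Prop :=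
  ∀ i j, A (Equiv.swap τ τ' i) (Equiv.swap τ τ' j) = A i j

/-- `λ₁(G) = −1` if the twins are adjacent and `0` otherwise; for a 0-1 matrix this
is `−A τ τ'`. -/
def lam1 (A : Matrix (Fin (n + 2)) (Fin (n + 2)) ℤ) (τ τ' : Fin (n + 2)) : ℤ :=
  -(A τ τ')

/-- The vector `α(G)` with entry `−1` at `τ`, `1` at `τ'`, and `0` elsewhere. -/
def alphaVec (τ τ' : Fin (n + 2)) : Fin (n + 2) → ℤ :=
  fun i => if i = τ then -1 else if i = τ' then 1 else 0

/-- The reduction of `α(G)` modulo `p`. -/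
def alphaVecMod (p : ℕ) (τ τ' : Fin (n + 2)) : Fin (n + 2) → ZMod p :=
  fun i => ((alphaVec τ τ' i : ℤ) : ZMod p)

/-- The matrix `Ŵ(G) = [e, Ae, …, A^{n-2}e, α(G)]`. -/
def hatW (A : Matrix (Fin (n + 2)) (Fin (n + 2)) ℤ) (τ τ' : Fin (n + 2)) :
    Matrix (Fin (n + 2)) (Fin (n + 2)) ℤ :=
  Matrix.of fun i j => if (j : ℕ) = n + 1 then alphaVec τ τ' i else walkMatrix A i j

/-- The level of a rational matrix: the smallest positive integer `ℓ` such that `ℓQ` is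
an integer matrix. -/
noncomputable def level {m : ℕ} (Q : Matrix (Fin m) (Fin m) ℚ) : ℕ :=
  sInf {k : ℕ | 0 < k ∧ ∀ i j, ((k : ℚ) * Q i j).den = 1}

/-- A permutation matrix. -/
def IsPermMatrix {m : ℕ} (Q : Matrix (Fin m) (Fin m) ℚ) : Prop :=
  ∃ σ : Equiv.Perm (Fin m), ∀ i j, Q i j = if σ i = j then 1 else 0

/-- `G` is determined by its generalized spectrum: every graph generalized cospectral with
`G` is isomorphic to `G`. -/
def IsDGS (A : Matrix (Fin (n + 2)) (Fin (n + 2)) ℤ) : Prop :=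
  ∀ B : Matrix (Fin (n + 2)) (Fin (n + 2)) ℤ, B.IsAdjMatrix → GenCospectral A B →
    ∃ σ : Equiv.Perm (Fin (n + 2)), ∀ i j, B i j = A (σ i) (σ j)


/-- The walk matrix, over a commutative ring `R`, with its last column replaced by `v`. -/
def replaceLast {R : Type*} [CommRing R] (A : Matrix (Fin (n + 2)) (Fin (n + 2)) ℤ)
    (v : Fin (n + 2) → R) : Matrix (Fin (n + 2)) (Fin (n + 2)) R :=
  Matrix.of fun i j => if (j : ℕ) = n + 1 then v i else ((walkMatrix A i j : ℤ) : R)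

theorem det_replaceLast {R : Type*} [CommRing R] (A : Matrix (Fin (n + 2)) (Fin (n + 2)) ℤ)
    (v : Fin (n + 2) → R) : (replaceLast A v).det = ∑ i, v i * (xiVec A i : R) := by
  rw [Matrix.det_succ_column _ (Fin.last (n + 1))]
  refine Finset.sum_congr rfl fun i _ => ?_
  have hminor : (replaceLast A v).submatrix i.succAbove (Fin.last (n + 1)).succAbove
      = (Xmat A i).map (Int.castRingHom R) := by
    ext r c
    have hc : (c : ℕ) ≠ n + 1 := c.isLt.ne
    simp [replaceLast, Xmat, Vmat, hc]
  have hdet : ((Xmat A i).map (Int.castRingHom R)).det = (((Xmat A i).det : ℤ) : R) :=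
    ((Int.castRingHom R).map_det (Xmat A i)).symm
  rw [hminor, hdet]
  simp [replaceLast, xiVec, cofactorLast]
  ring

theorem pow_mulVec_swap {A : Matrix (Fin (n + 2)) (Fin (n + 2)) ℤ} {τ τ' : Fin (n + 2)}
    (htw : IsTwinPair A τ τ') (k : ℕ) (i : Fin (n + 2)) :
    ((A ^ k) *ᵥ eVec (n + 2)) (Equiv.swap τ τ' i) = ((A ^ k) *ᵥ eVec (n + 2)) i := by
  induction k generalizing i with
  | zero => simp [eVec]
  | succ k ih =>
    rw [pow_succ', ← Matrix.mulVec_mulVec]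
    generalize (A ^ k) *ᵥ eVec (n + 2) = w at ih
    change ∑ j, A (Equiv.swap τ τ' i) j * w j = ∑ j, A i j * w j
    rw [← Equiv.sum_comp (Equiv.swap τ τ')]
    exact Finset.sum_congr rfl fun j _ => by rw [htw i j, ih]

theorem walkMatrix_twin_row {A : Matrix (Fin (n + 2)) (Fin (n + 2)) ℤ} {τ τ' : Fin (n + 2)}
    (htw : IsTwinPair A τ τ') (j : Fin (n + 2)) : walkMatrix A τ j = walkMatrix A τ' j := by
  simpa [walkMatrix] using (pow_mulVec_swap htw j τ).symm

theorem xiVec_eq_zero {A : Matrix (Fin (n + 2)) (Fin (n + 2)) ℤ} {τ τ' : Fin (n + 2)}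
    (hne : τ ≠ τ') (htw : IsTwinPair A τ τ') {i : Fin (n + 2)} (hi : i ≠ τ) (hi' : i ≠ τ') :
    xiVec A i = 0 := by
  obtain ⟨r, rfl⟩ := Fin.exists_succAbove_eq hi.symm
  obtain ⟨r', rfl⟩ := Fin.exists_succAbove_eq hi'.symm
  have hr : r ≠ r' := fun h => hne (by rw [h])
  have hdet : (Xmat A i).det = 0 :=
    Matrix.det_zero_of_row_eq hr (funext fun c => by
      simpa [Xmat, Vmat] using walkMatrix_twin_row htw c.castSucc)
  simp [xiVec, cofactorLast, hdet]

theorem sum_xiVec (A : Matrix (Fin (n + 2)) (Fin (n + 2)) ℤ) : ∑ i, xiVec A i = 0 := by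
  have h := det_replaceLast A (eVec (n + 2))
  -- The columns `0` and `n + 1` of this matrix are both the all-ones vector.
  rw [Matrix.det_zero_of_column_eq (i := 0) (j := Fin.last (n + 1)) (by simp [Fin.ext_iff])
    (fun k => by simp [replaceLast, walkMatrix, eVec])] at h
  simpa [eVec] using h.symm

theorem xiVec_twin {A : Matrix (Fin (n + 2)) (Fin (n + 2)) ℤ} {τ τ' : Fin (n + 2)}
    (hne : τ ≠ τ') (htw : IsTwinPair A τ τ') : xiVec A τ' = -xiVec A τ := by
  have hsum := sum_xiVec A
  rw [Fintype.sum_eq_add τ τ' hne fun i hi => xiVec_eq_zero hne htw hi.1 hi.2] at hsum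
  exact eq_neg_of_add_eq_zero_right hsum

/-- Pairing with `ξ` only sees the difference of the twin coordinates, since `ξ` is a multiple
of `α`. -/
theorem sum_mul_xiVec {R : Type*} [CommRing R] {A : Matrix (Fin (n + 2)) (Fin (n + 2)) ℤ}
    {τ τ' : Fin (n + 2)} (hne : τ ≠ τ') (htw : IsTwinPair A τ τ') (v : Fin (n + 2) → R) :
    ∑ i, v i * (xiVec A i : R) = (v τ - v τ') * (xiVec A τ : R) := by
  rw [Fintype.sum_eq_add τ τ' hne fun i hi => by simp [xiVec_eq_zero hne htw hi.1 hi.2],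
    xiVec_twin hne htw]
  push_cast
  ring

/-- `det W₀(G) = 2^{⌊n/2⌋}·b²` and `det Ŵ(G) = ±2^{⌊n/2⌋}·b`. -/
theorem det_W0_and_det_hatW
    (n : ℕ) (A : Matrix (Fin (n + 2)) (Fin (n + 2)) ℤ)
    (hA : A.IsAdjMatrix) (hac : IsAlmostControllable A)
    (τ τ' : Fin (n + 2)) (hlt : τ < τ') (htw : IsTwinPair A τ τ')
    (b : ℤ) (hodd : Odd b) (hsf : Squarefree b) (hpos : 0 < b)
    (hcof : cofactorLast A τ = 2 ^ ((n + 2) / 2 - 1) * b ∨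
            cofactorLast A τ = -(2 ^ ((n + 2) / 2 - 1) * b)) :
    (Wdelta A 0).det = (2 : ℚ) ^ ((n + 2) / 2) * (b : ℚ) ^ 2 ∧
    ((hatW A τ τ').det = 2 ^ ((n + 2) / 2) * b ∨
     (hatW A τ τ').det = -(2 ^ ((n + 2) / 2) * b)) := by
  have hne : τ ≠ τ' := hlt.ne
  have hW0 : Wdelta A 0 = replaceLast A fun i => twoPow n * (xiVec A i : ℚ) := by
    ext i j
    simp [Wdelta, replaceLast]
  have hhat : hatW A τ τ' = replaceLast A (alphaVec τ τ') := by
    ext i j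
    simp [hatW, replaceLast]
  have hcof' : xiVec A τ = 2 ^ ((n + 2) / 2 - 1) * b ∨
      xiVec A τ = -(2 ^ ((n + 2) / 2 - 1) * b) := hcof
  -- Write `⌊(n + 2) / 2⌋ = m + 1`, so that no truncated subtraction remains.
  obtain ⟨m, hm⟩ : ∃ m, (n + 2) / 2 = m + 1 := ⟨n / 2, by omega⟩
  have htwo : twoPow n = ((2 : ℚ) ^ m)⁻¹ := by
    rw [twoPow, hm, ← zpow_natCast, ← _root_.zpow_neg]
    congr 1
    push_cast
    ring
  have hpow : (2 : ℚ) ^ m ≠ 0 := by positivity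
  rw [hm, Nat.add_sub_cancel] at hcof'
  rw [hW0, hhat, det_replaceLast, det_replaceLast, sum_mul_xiVec hne htw]
  have hα := sum_mul_xiVec hne htw (alphaVec τ τ')
  rw [hα, xiVec_twin hne htw, htwo, hm]
  have ha : alphaVec τ τ' τ = -1 := by simp [alphaVec]
  have ha' : alphaVec τ τ' τ' = 1 := by simp [alphaVec, hne.symm]
  rw [ha, ha']
  constructor
  · rcases hcof' with h | h <;> rw [h] <;> push_cast <;> field_simp <;> ring
  · rcases hcof' with h | h
    · right
      rw [h, Int.cast_id]
      ring
    · left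
      rw [h, Int.cast_id]
      ring

end AlmostControllableGraphs
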